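/- Consider a finite set of agents indexed by a finite type ι. For each agent i, a message has the form m_i = (p_i, a_i, b_i) ∈ P_i × E_i × F_i, where P_i is an arbitrary type and E_i, F_i are real inner product spaces. Given functions C_i : (Π j, P_j × E_j × F_j) → ℝ, A_i : (Π j, P_j × E_j × F_j) → E_i and B_i : (Π j, P_j × E_j × F_j) → F_i, each invariant under changes of the components a_i and b_i of agent i's own message, define agent i's total cost at a profile m by J_i(m) = C_i(m) + ‖a_i − A_i(m)‖² + ‖b_i − B_i(m)‖². If m* is a Nash equilibrium of this game, then for every agent i one has a_i* = A_i(m*) and b_i* = B_i(m*). (This is the abstract content of Lemma 1: at any Nash equilibrium of the mechanism game, each agent reports its state trajectory equal to the trajectory computed by the principal, x̃^{(i)*} = x^{(i)}(y*), and its sensitivity report equal to the optimal Lagrange multipliers, λ̃^{(i)*} = λ^{*(i)}, because its quadratic penalty fees vanish exactly there.) -/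

import Mathlib

/-! The cost of an agent is a term independent of its own reports `a_i`, `b_i` plus two
nonnegative penalties. Reporting the targets `A_i(m*)`, `B_i(m*)` exactly is a unilateral deviation
that makes both penalties vanish and leaves the other term unchanged, so at an equilibrium the
penalties must already sum to zero, hence each is zero. -/

/-- **abstract Lemma 1.**
At any Nash equilibrium of the mechanism game, where agent `i`'s cost is
`J_i(m) = C_i(m) + ‖a_i − A_i(m)‖² + ‖b_i − B_i(m)‖²` with `C_i`, `A_i`, `B_i`
invariant under changes of agent `i`'s own `a_i` and `b_i` components,
each agent reports `a_i* = A_i(m*)` and `b_i* = B_i(m*)`. -/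
theorem nash_equilibrium_truthful_reports
    {ι : Type*} [Fintype ι]
    (P : ι → Type*)
    (E : ι → Type*) [∀ i, NormedAddCommGroup (E i)] [∀ i, InnerProductSpace ℝ (E i)]
    (F : ι → Type*) [∀ i, NormedAddCommGroup (F i)] [∀ i, InnerProductSpace ℝ (F i)]
    (C : ∀ i, (∀ j, P j × E j × F j) → ℝ)
    (A : ∀ i, (∀ j, P j × E j × F j) → E i)
    (B : ∀ i, (∀ j, P j × E j × F j) → F i)
    -- invariance of C i, A i, B i under changes of the E i and F i components
    -- of agent i's own message
    (hC : ∀ i (m m' : ∀ j, P j × E j × F j),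
      (∀ j, j ≠ i → m j = m' j) → (m i).1 = (m' i).1 → C i m = C i m')
    (hA : ∀ i (m m' : ∀ j, P j × E j × F j),
      (∀ j, j ≠ i → m j = m' j) → (m i).1 = (m' i).1 → A i m = A i m')
    (hB : ∀ i (m m' : ∀ j, P j × E j × F j),
      (∀ j, j ≠ i → m j = m' j) → (m i).1 = (m' i).1 → B i m = B i m')
    -- total cost of agent i at a profile m
    (J : ∀ i, (∀ j, P j × E j × F j) → ℝ)
    (hJ : ∀ i m, J i m =
      C i m + ‖(m i).2.1 - A i m‖ ^ 2 + ‖(m i).2.2 - B i m‖ ^ 2)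
    -- m* is a Nash equilibrium
    (mstar : ∀ j, P j × E j × F j)
    (hNash : ∀ i (m : ∀ j, P j × E j × F j),
      (∀ j, j ≠ i → m j = mstar j) → J i mstar ≤ J i m) :
    ∀ i, (mstar i).2.1 = A i mstar ∧ (mstar i).2.2 = B i mstar := by
  classical
  intro i
  -- Deviation of agent `i`: keep `p_i` and report exactly `A i mstar` and `B i mstar`.
  -- By invariance the targets and `C i` do not move, so only the penalties change, to zero.
  set m : ∀ j, P j × E j × F j :=
    Function.update mstar i ((mstar i).1, A i mstar, B i mstar) with hm
  have hoff : ∀ j, j ≠ i → m j = mstar j := fun j hj => by simp [hm, hj]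
  have hi : m i = ((mstar i).1, A i mstar, B i mstar) := by simp [hm]
  have hp : (m i).1 = (mstar i).1 := by rw [hi]
  have h := hNash i m hoff
  rw [hJ, hJ, hC i m mstar hoff hp, hA i m mstar hoff hp, hB i m mstar hoff hp, hi] at h
  simp only [sub_self, norm_zero] at h
  have ha : ‖(mstar i).2.1 - A i mstar‖ ^ 2 = 0 := by
    nlinarith [sq_nonneg ‖(mstar i).2.1 - A i mstar‖, sq_nonneg ‖(mstar i).2.2 - B i mstar‖]
  have hb : ‖(mstar i).2.2 - B i mstar‖ ^ 2 = 0 := by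
    nlinarith [sq_nonneg ‖(mstar i).2.1 - A i mstar‖, sq_nonneg ‖(mstar i).2.2 - B i mstar‖]
  exact ⟨sub_eq_zero.mp (norm_eq_zero.mp (pow_eq_zero_iff two_ne_zero |>.mp ha)),
    sub_eq_zero.mp (norm_eq_zero.mp (pow_eq_zero_iff two_ne_zero |>.mp hb))⟩
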